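/- arXiv:1307.5088 — 2 statements merged into one kernel-verified Lean document; each statement's English description precedes it below -/
import Mathlib

section
/- If f is holomorphic in the unit disc D and belongs to the Hardy space H^1 (i.e. its nontangential maximal function is in L^1 of the circle), then there exists a constant C > 0 such that for all λ > 0, the Lebesgue area of the set {z ∈ D : |f(z)| > λ(1−|z|)} is at most C/λ. -/
open MeasureTheory Real Set Filter

noncomputable section

lemma slice1 {S : Set ℂ} (hS : MeasurableSet S) {a s k : ℝ} (hs : 0 ≤ s)
    (h1 : ∀ z ∈ S, |z.re - a| ≤ s)
    (h2 : ∀ z ∈ S, ∀ w ∈ S, z.re = w.re → |z.im - w.im| ≤ k) :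
    volume S ≤ ENNReal.ofReal (2 * s) * ENNReal.ofReal k := by
  have e := (Complex.volume_preserving_equiv_real_prod.symm).measure_preimage hS.nullMeasurableSet
  rw [← e]
  have hm : MeasurableSet (Complex.measurableEquivRealProd.symm ⁻¹' S) :=
    Complex.measurableEquivRealProd.symm.measurable hS
  rw [Measure.volume_eq_prod, Measure.prod_apply hm]
  calc _ ≤ ∫⁻ x, (Icc (a - s) (a + s)).indicator (fun _ => ENNReal.ofReal k) x := by
        refine lintegral_mono fun x => ?_
        by_cases hx : x ∈ Icc (a - s) (a + s)
        · rw [indicator_of_mem hx]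
          refine (Real.volume_le_diam _).trans (Metric.ediam_le ?_)
          intro y hy y' hy'
          rw [edist_dist, Real.dist_eq]
          exact ENNReal.ofReal_le_ofReal (h2 _ hy _ hy' rfl)
        · rw [indicator_of_notMem hx]
          have : Prod.mk x ⁻¹' (Complex.measurableEquivRealProd.symm ⁻¹' S) = ∅ := by
            ext y
            simp only [mem_preimage, mem_empty_iff_false, iff_false]
            intro hy
            have := h1 _ hy
            simp only [Complex.measurableEquivRealProd_symm_apply] at this
            rw [abs_le] at this
            exact hx ⟨by linarith, by linarith⟩
          rw [this]; simp
    _ = _ := by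
        rw [lintegral_indicator_const measurableSet_Icc, Real.volume_Icc, mul_comm]
        congr 2; ring

lemma slice2 {S : Set ℂ} (hS : MeasurableSet S) {a s k : ℝ} (hs : 0 ≤ s)
    (h1 : ∀ z ∈ S, |z.im - a| ≤ s)
    (h2 : ∀ z ∈ S, ∀ w ∈ S, z.im = w.im → |z.re - w.re| ≤ k) :
    volume S ≤ ENNReal.ofReal (2 * s) * ENNReal.ofReal k := by
  have e := (Complex.volume_preserving_equiv_real_prod.symm).measure_preimage hS.nullMeasurableSet
  rw [← e]
  have hm : MeasurableSet (Complex.measurableEquivRealProd.symm ⁻¹' S) :=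
    Complex.measurableEquivRealProd.symm.measurable hS
  rw [Measure.volume_eq_prod, Measure.prod_apply_symm hm]
  calc _ ≤ ∫⁻ x, (Icc (a - s) (a + s)).indicator (fun _ => ENNReal.ofReal k) x := by
        refine lintegral_mono fun x => ?_
        by_cases hx : x ∈ Icc (a - s) (a + s)
        · rw [indicator_of_mem hx]
          refine (Real.volume_le_diam _).trans (Metric.ediam_le ?_)
          intro y hy y' hy'
          rw [edist_dist, Real.dist_eq]
          exact ENNReal.ofReal_le_ofReal (h2 _ hy _ hy' rfl)
        · rw [indicator_of_notMem hx]
          have : (fun y => (y, x)) ⁻¹' (Complex.measurableEquivRealProd.symm ⁻¹' S) = ∅ := by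
            ext y
            simp only [mem_preimage, mem_empty_iff_false, iff_false]
            intro hy
            have := h1 _ hy
            simp only [Complex.measurableEquivRealProd_symm_apply] at this
            rw [abs_le] at this
            exact hx ⟨by linarith, by linarith⟩
          rw [this]; simp
    _ = _ := by
        rw [lintegral_indicator_const measurableSet_Icc, Real.volume_Icc, mul_comm]
        congr 2; ring

lemma diff_aux {R h x y y' : ℝ} (hR : 0 < R) (h0 : 0 ≤ h) (hh : h ≤ R / 2)
    (hy : |x| ≤ y) (hy' : |x| ≤ y')
    (l1 : (R - h)^2 ≤ x^2 + y^2) (u1 : x^2 + y^2 ≤ R^2)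
    (l2 : (R - h)^2 ≤ x^2 + y'^2) (u2 : x^2 + y'^2 ≤ R^2) : |y - y'| ≤ 3 * h := by
  have key : ∀ y : ℝ, |x| ≤ y → (R - h)^2 ≤ x^2 + y^2 → R / 3 ≤ y := by
    intro y hy l1
    have hx : x^2 ≤ y^2 := by rw [← sq_abs x]; exact pow_le_pow_left₀ (abs_nonneg _) hy 2
    have h0y : 0 ≤ y := (abs_nonneg _).trans hy
    by_contra hc
    push Not at hc
    nlinarith
  have a1 := key y hy l1
  have a2 := key y' hy' l2
  rw [abs_le]
  constructor
  · by_contra hc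
    push Not at hc
    nlinarith
  · by_contra hc
    push Not at hc
    nlinarith

lemma area_thin {R h s : ℝ} (hR : 0 < R) (h0 : 0 ≤ h) (hs : h ≤ s) (b : ℂ) :
    volume {z : ℂ | R - h ≤ ‖z‖ ∧ ‖z‖ ≤ R ∧ ‖z - b‖ ≤ s} ≤ ENNReal.ofReal (24 * h * s) := by
  have s0 : 0 ≤ s := h0.trans hs
  rcases le_or_gt h (R / 2) with hh | hh
  · set A := {z : ℂ | R - h ≤ ‖z‖ ∧ ‖z‖ ≤ R ∧ ‖z - b‖ ≤ s} with hA
    have hAc : IsClosed A := by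
      have k1 : IsClosed {z : ℂ | R - h ≤ ‖z‖} := isClosed_le (by fun_prop) (by fun_prop)
      have k2 : IsClosed {z : ℂ | ‖z‖ ≤ R} := isClosed_le (by fun_prop) (by fun_prop)
      have k3 : IsClosed {z : ℂ | ‖z - b‖ ≤ s} := isClosed_le (by fun_prop) (by fun_prop)
      exact k1.inter (k2.inter k3)
    have hre : ∀ z ∈ A, |z.re - b.re| ≤ s := fun z hz => by
      simpa using (Complex.abs_re_le_norm (z - b)).trans hz.2.2
    have him : ∀ z ∈ A, |z.im - b.im| ≤ s := fun z hz => by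
      simpa using (Complex.abs_im_le_norm (z - b)).trans hz.2.2
    have hl : ∀ z ∈ A, (R - h)^2 ≤ z.re^2 + z.im^2 := fun z hz => by
      have := pow_le_pow_left₀ (by linarith) hz.1 2
      rw [← Complex.normSq_eq_norm_sq, Complex.normSq_apply] at this
      linarith
    have hu : ∀ z ∈ A, z.re^2 + z.im^2 ≤ R^2 := fun z hz => by
      have := pow_le_pow_left₀ (norm_nonneg _) hz.2.1 2
      rw [← Complex.normSq_eq_norm_sq, Complex.normSq_apply] at this
      linarith
    have c1 : IsClosed {z : ℂ | |z.re| ≤ z.im} := isClosed_le (by fun_prop) (by fun_prop)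
    have c2 : IsClosed {z : ℂ | |z.re| ≤ -z.im} := isClosed_le (by fun_prop) (by fun_prop)
    have c3 : IsClosed {z : ℂ | |z.im| ≤ z.re} := isClosed_le (by fun_prop) (by fun_prop)
    have c4 : IsClosed {z : ℂ | |z.im| ≤ -z.re} := isClosed_le (by fun_prop) (by fun_prop)
    have v1 := slice1 (hAc.inter c1).measurableSet s0 (k := 3 * h) (fun z hz => hre z hz.1)
      (fun z hz w hw e => by
        have p := hw.2
        have l := hl w hw.1
        have u := hu w hw.1
        simp only [mem_setOf_eq] at p
        rw [← e] at p l u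
        exact diff_aux hR h0 hh hz.2 p (hl z hz.1) (hu z hz.1) l u)
    have v2 := slice1 (hAc.inter c2).measurableSet s0 (k := 3 * h) (fun z hz => hre z hz.1)
      (fun z hz w hw e => by
        have p := hw.2
        have l := hl w hw.1
        have u := hu w hw.1
        have l' := hl z hz.1
        have u' := hu z hz.1
        simp only [mem_setOf_eq] at p
        rw [← e] at p l u
        rw [← neg_sq (Complex.im _)] at l u l' u'
        have := diff_aux hR h0 hh hz.2 p l' u' l u
        rw [abs_sub_comm] at this
        convert this using 2; ring)
    have v3 := slice2 (hAc.inter c3).measurableSet s0 (k := 3 * h) (fun z hz => him z hz.1)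
      (fun z hz w hw e => by
        have p := hw.2
        have l := hl w hw.1
        have u := hu w hw.1
        have l' := hl z hz.1
        have u' := hu z hz.1
        simp only [mem_setOf_eq] at p
        rw [← e] at p l u
        rw [add_comm] at l u l' u'
        exact diff_aux hR h0 hh hz.2 p l' u' l u)
    have v4 := slice2 (hAc.inter c4).measurableSet s0 (k := 3 * h) (fun z hz => him z hz.1)
      (fun z hz w hw e => by
        have p := hw.2
        have l := hl w hw.1
        have u := hu w hw.1
        have l' := hl z hz.1
        have u' := hu z hz.1
        simp only [mem_setOf_eq] at p
        rw [← e] at p l u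
        rw [add_comm, ← neg_sq (Complex.re _)] at l u l' u'
        have := diff_aux hR h0 hh hz.2 p l' u' l u
        rw [abs_sub_comm] at this
        convert this using 2; ring)
    have hcov : A ⊆ (A ∩ {z : ℂ | |z.re| ≤ z.im} ∪ A ∩ {z : ℂ | |z.re| ≤ -z.im}) ∪
        (A ∩ {z : ℂ | |z.im| ≤ z.re} ∪ A ∩ {z : ℂ | |z.im| ≤ -z.re}) := by
      intro z hz
      simp only [mem_union, mem_inter_iff, hz, true_and, mem_setOf_eq]
      rcases le_total |z.re| |z.im| with q | q
      · left
        rcases abs_choice z.im with r | r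
        · left; rwa [r] at q
        · right; rwa [r] at q
      · right
        rcases abs_choice z.re with r | r
        · left; rwa [r] at q
        · right; rwa [r] at q
    calc volume A ≤ _ := measure_mono hcov
      _ ≤ _ := (measure_union_le _ _).trans
        (add_le_add (measure_union_le _ _) (measure_union_le _ _))
      _ ≤ _ := add_le_add (add_le_add v1 v2) (add_le_add v3 v4)
      _ = _ := by
        rw [← ENNReal.ofReal_mul (by linarith), ← ENNReal.ofReal_add (by positivity) (by positivity),
          ← ENNReal.ofReal_add (by positivity) (by positivity)]
        congr 1; ring
  · calc _ ≤ volume (Metric.closedBall (0:ℂ) R) := by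
          apply measure_mono
          intro z hz
          simpa using hz.2.1
      _ = ENNReal.ofReal (R^2 * π) := by
          rw [Complex.volume_closedBall, ENNReal.ofReal_mul (by positivity),
            ENNReal.ofReal_pow hR.le]
          congr 1
          rw [← NNReal.coe_real_pi, ENNReal.ofReal_coe_nnreal]
      _ ≤ _ := by
          apply ENNReal.ofReal_le_ofReal
          have : R^2 ≤ 4 * (h * s) := by nlinarith
          nlinarith [pi_le_four, pi_pos, mul_nonneg h0 s0]

lemma tail_bound {μ : Measure ℂ} {z : ℂ} {d lam : ℝ} (hd : 0 < d) (hl : 0 < lam)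
    (hae : ∀ᵐ w ∂μ, d ≤ ‖w - z‖)
    (hb : ∀ j : ℕ, μ (Metric.closedBall z (2^(j+1) * d)) ≤ ENNReal.ofReal (lam / 4 * 3^j * d^2)) :
    ∫⁻ w, ENNReal.ofReal (1 / ‖w - z‖^2) ∂μ ≤ ENNReal.ofReal lam := by
  calc _ ≤ ∫⁻ w, ∑' j : ℕ, (Metric.closedBall z (2^(j+1) * d)).indicator
          (fun _ => ENNReal.ofReal (1 / (4^j * d^2))) w ∂μ := by
        refine lintegral_mono_ae ?_
        filter_upwards [hae] with w hw
        obtain ⟨n, hn1, hn2⟩ := exists_nat_pow_near (x := ‖w - z‖ / d) (y := (2:ℝ))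
          (by rwa [le_div_iff₀ hd, one_mul]) (by norm_num)
        refine le_trans ?_ (ENNReal.le_tsum n)
        rw [indicator_of_mem]
        · apply ENNReal.ofReal_le_ofReal
          rw [le_div_iff₀ hd] at hn1
          have : (2 ^ n * d)^2 ≤ ‖w - z‖^2 := pow_le_pow_left₀ (by positivity) hn1 2
          apply one_div_le_one_div_of_le (by positivity)
          rw [mul_pow, ← pow_mul, mul_comm n, pow_mul] at this
          norm_num at this ⊢
          exact this
        · rw [Metric.mem_closedBall, dist_eq_norm]
          rw [div_lt_iff₀ hd] at hn2
          exact hn2.le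
    _ = ∑' j : ℕ, ENNReal.ofReal (1 / (4^j * d^2)) * μ (Metric.closedBall z (2^(j+1) * d)) := by
        rw [lintegral_tsum]
        · congr 1; ext j
          rw [lintegral_indicator_const Metric.isClosed_closedBall.measurableSet]
        · intro j
          exact (measurable_const.indicator Metric.isClosed_closedBall.measurableSet).aemeasurable
    _ ≤ ∑' j : ℕ, ENNReal.ofReal (lam / 4 * (3/4)^j) := by
        refine ENNReal.tsum_le_tsum fun j => ?_
        refine (mul_le_mul_right (hb j) _).trans ?_
        rw [← ENNReal.ofReal_mul (by positivity)]
        apply le_of_eq; congr 1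
        rw [div_pow]; field_simp
    _ = ENNReal.ofReal lam := by
        have := (hasSum_geometric_of_lt_one (r := (3/4:ℝ)) (by norm_num) (by norm_num)).mul_left
          (lam / 4)
        rw [← ENNReal.ofReal_tsum_of_nonneg (fun j => by positivity) this.summable, this.tsum_eq]
        congr 1; norm_num

lemma Ej_bound {μ : Measure ℂ} {R lam : ℝ} (hR : 0 < R) (hl : 0 < lam) (j : ℕ) :
    volume {z : ℂ | ‖z‖ < R ∧ ENNReal.ofReal (lam / 4 * 3^j * (R - ‖z‖)^2) <
      μ (Metric.closedBall z (2^(j+1) * (R - ‖z‖)))} ≤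
      ENNReal.ofReal (1152 / lam * (2/3)^j) * μ univ := by
  set E := {z : ℂ | ‖z‖ < R ∧ ENNReal.ofReal (lam / 4 * 3^j * (R - ‖z‖)^2) <
      μ (Metric.closedBall z (2^(j+1) * (R - ‖z‖)))} with hE
  obtain ⟨u, huE, hdisj, hcov⟩ := Vitali.exists_disjoint_subfamily_covering_enlargement
    (fun z : ℂ => Metric.closedBall z (2^(j+1) * (R - ‖z‖))) E
    (fun z => 2^(j+1) * (R - ‖z‖)) 2 (by norm_num)
    (fun z hz => mul_nonneg (by positivity) (by linarith [hz.1])) (2^(j+1) * R)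
    (fun z hz => mul_le_mul_of_nonneg_left (by linarith [norm_nonneg z]) (by positivity))
    (fun z hz => ⟨z, Metric.mem_closedBall_self
      (mul_nonneg (by positivity) (by linarith [hz.1]))⟩)
  have hcount : u.Countable := hdisj.countable_of_nonempty_interior fun z hz => by
    have : 0 < 2^(j+1) * (R - ‖z‖) := mul_pos (by positivity) (by linarith [(huE hz).1])
    exact ⟨z, Metric.ball_subset_interior_closedBall (Metric.mem_ball_self this)⟩
  have hsub : E ⊆ ⋃ b ∈ u, {z : ℂ | R - (2 * (R - ‖b‖)) ≤ ‖z‖ ∧ ‖z‖ ≤ R ∧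
      ‖z - b‖ ≤ 3 * (2^(j+1) * (R - ‖b‖))} := by
    intro z hz
    obtain ⟨b, hb, ⟨w, hw1, hw2⟩, hδ⟩ := hcov z hz
    simp only [mem_iUnion]
    refine ⟨b, hb, ?_, hz.1.le, ?_⟩
    · have : (0:ℝ) < 2^(j+1) := by positivity
      have : R - ‖z‖ ≤ 2 * (R - ‖b‖) := by
        by_contra hc
        push Not at hc
        nlinarith
      linarith
    · rw [← dist_eq_norm]
      rw [Metric.mem_closedBall] at hw1 hw2
      have := dist_triangle_left z b w
      linarith
  haveI := hcount.to_subtype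
  calc volume E ≤ _ := measure_mono hsub
    _ ≤ ∑' b : u, volume {z : ℂ | R - (2 * (R - ‖(b:ℂ)‖)) ≤ ‖z‖ ∧ ‖z‖ ≤ R ∧
      ‖z - b‖ ≤ 3 * (2^(j+1) * (R - ‖(b:ℂ)‖))} := measure_biUnion_le _ hcount _
    _ ≤ ∑' b : u, ENNReal.ofReal (1152 / lam * (2/3)^j) *
        μ (Metric.closedBall (b:ℂ) (2^(j+1) * (R - ‖(b:ℂ)‖))) := by
      refine ENNReal.tsum_le_tsum fun b => ?_
      have hb := huE b.2
      have hd : 0 < R - ‖(b:ℂ)‖ := by linarith [hb.1]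
      refine (area_thin hR (by linarith) ?_ _).trans ?_
      · have : (1:ℝ) ≤ 2^(j+1) := one_le_pow₀ (by norm_num)
        nlinarith
      · refine le_trans ?_ (mul_le_mul_right hb.2.le _)
        rw [← ENNReal.ofReal_mul (by positivity)]
        apply le_of_eq; congr 1
        rw [div_pow]; field_simp; ring
    _ ≤ _ := by
      rw [ENNReal.tsum_mul_left]
      refine mul_le_mul_right ((tsum_meas_le_meas_iUnion_of_disjoint μ ?_ ?_).trans
        (measure_mono (subset_univ _))) _
      · exact fun b => Metric.isClosed_closedBall.measurableSet
      · intro a b hab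
        exact hdisj a.2 b.2 (fun h => hab (Subtype.ext h))

lemma weak_bound {μ : Measure ℂ} {R lam : ℝ} (hR : 0 < R) (hl : 0 < lam)
    (hae : ∀ᵐ w ∂μ, ‖w‖ = R) :
    volume {z : ℂ | ‖z‖ < R ∧ ENNReal.ofReal lam < ∫⁻ w, ENNReal.ofReal (1 / ‖w - z‖^2) ∂μ} ≤
      ENNReal.ofReal (3456 / lam) * μ univ := by
  calc _ ≤ volume (⋃ j : ℕ, {z : ℂ | ‖z‖ < R ∧ ENNReal.ofReal (lam / 4 * 3^j * (R - ‖z‖)^2) <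
      μ (Metric.closedBall z (2^(j+1) * (R - ‖z‖)))}) := by
        apply measure_mono
        intro z hz
        by_contra hc
        simp only [mem_iUnion, mem_setOf_eq, not_exists, not_and, not_lt] at hc
        refine absurd hz.2 (not_lt.2 (tail_bound (d := R - ‖z‖) (by linarith [hz.1]) hl ?_
          fun j => hc j hz.1))
        filter_upwards [hae] with w hw
        rw [← hw]
        exact norm_sub_norm_le w z
    _ ≤ _ := measure_iUnion_le _
    _ ≤ _ := ENNReal.tsum_le_tsum fun j => Ej_bound hR hl j
    _ = _ := by
        have := (hasSum_geometric_of_lt_one (r := (2/3:ℝ)) (by norm_num) (by norm_num)).mul_left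
          (1152 / lam)
        rw [ENNReal.tsum_mul_right,
          ← ENNReal.ofReal_tsum_of_nonneg (fun j => by positivity) this.summable, this.tsum_eq]
        congr 2; norm_num; ring

lemma poisson_bound {f : ℂ → ℂ} (hf : DifferentiableOn ℂ f (Metric.ball 0 1)) {R : ℝ}
    (hR : 0 < R) (hR1 : R < 1) {z : ℂ} (hz : ‖z‖ < R) :
    ENNReal.ofReal ‖f z‖ ≤ ENNReal.ofReal (R - ‖z‖) *
      ∫⁻ θ in Set.Ico (0:ℝ) (2*π), ENNReal.ofReal ‖f ((R:ℂ) * Complex.exp ((θ:ℂ) * Complex.I))‖ *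
        ENNReal.ofReal (1 / ‖(R:ℂ) * Complex.exp ((θ:ℂ) * Complex.I) - z‖^2) := by
  have hd : DiffContOnCl ℂ f (Metric.ball 0 R) := by
    apply DifferentiableOn.diffContOnCl
    rw [closure_ball _ hR.ne']
    exact hf.mono (Metric.closedBall_subset_ball hR1)
  have hp := hd.circleAverage_poissonKernel_smul (w := z) (by simpa using hz)
  rw [Real.circleAverage, intervalIntegral.integral_of_le (by positivity)] at hp
  rw [ofReal_norm_eq_enorm, ← hp, enorm_smul]
  have h1 : ‖(2 * π)⁻¹‖ₑ ≤ ENNReal.ofReal (1/2) := by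
    rw [← ofReal_norm_eq_enorm]
    apply ENNReal.ofReal_le_ofReal
    rw [Real.norm_of_nonneg (by positivity), ← one_div]
    apply one_div_le_one_div_of_le (by norm_num)
    nlinarith [pi_gt_three]
  refine (mul_le_mul' h1 (enorm_integral_le_lintegral_enorm _)).trans ?_
  rw [← lintegral_const_mul' _ _ ENNReal.ofReal_ne_top,
    ← lintegral_const_mul' _ _ ENNReal.ofReal_ne_top, setLIntegral_congr Ico_ae_eq_Ioc]
  refine lintegral_mono fun θ => ?_
  have hw : ‖(R:ℂ) * Complex.exp ((θ:ℂ) * Complex.I)‖ = R := by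
    rw [norm_mul, Complex.norm_exp_ofReal_mul_I]; simp [hR.le]
  simp only [circleMap, zero_add, Pi.smul_apply', enorm_smul]
  rw [← ofReal_norm_eq_enorm, ← ofReal_norm_eq_enorm, ← ENNReal.ofReal_mul (by positivity),
    ← ENNReal.ofReal_mul (by norm_num), ← ENNReal.ofReal_mul (by positivity),
    ← ENNReal.ofReal_mul (by linarith)]
  apply ENNReal.ofReal_le_ofReal
  rw [poissonKernel_def]
  simp only [sub_zero, hw]
  have : 0 ≤ R^2 - ‖z‖^2 := by nlinarith [norm_nonneg z]
  rw [Real.norm_of_nonneg (by positivity)]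
  have h2 : R^2 - ‖z‖^2 ≤ 2 * (R - ‖z‖) := by nlinarith [norm_nonneg z]
  generalize ‖(R:ℂ) * Complex.exp ((θ:ℂ) * Complex.I) - z‖ = q
  have hp0 := norm_nonneg (f ((R:ℂ) * Complex.exp ((θ:ℂ) * Complex.I)))
  generalize ‖f ((R:ℂ) * Complex.exp ((θ:ℂ) * Complex.I))‖ = p at *
  calc 1 / 2 * ((R^2 - ‖z‖^2) / q^2 * p) = (R^2 - ‖z‖^2) * (1 / 2 * (1 / q^2) * p) := by ring
    _ ≤ (2 * (R - ‖z‖)) * (1 / 2 * (1 / q^2) * p) :=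
      mul_le_mul_of_nonneg_right h2 (by positivity)
    _ = _ := by ring

theorem inner_H1_implies_weak_area_bound (f : ℂ → ℂ)
    (hf : DifferentiableOn ℂ f (Metric.ball 0 1))
    (hH1 : ∃ Cn : ℝ, ∀ r : ℝ, 0 ≤ r → r < 1 →
      (∫⁻ θ in Set.Ico (0:ℝ) (2*π),
          ENNReal.ofReal ‖f ((r:ℂ) * Complex.exp ((θ:ℂ) * Complex.I))‖) ≤ ENNReal.ofReal Cn) :
    ∃ C > (0:ℝ), ∀ lam > (0:ℝ),
      volume {z ∈ Metric.ball (0:ℂ) 1 | lam * (1 - ‖z‖) < ‖f z‖} ≤ ENNReal.ofReal (C / lam) := by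
  obtain ⟨Cn, hCn⟩ := hH1
  refine ⟨3456 * max Cn 0 + 1, by positivity, fun lam hl => ?_⟩
  have key : ∀ R : ℝ, 0 < R → R < 1 →
      volume {z : ℂ | ‖z‖ < R ∧ lam * (1 - ‖z‖) < ‖f z‖} ≤
        ENNReal.ofReal ((3456 * max Cn 0 + 1) / lam) := by
    intro R hR hR1
    set p : ℝ → ℂ := fun θ => (R:ℂ) * Complex.exp ((θ:ℂ) * Complex.I) with hp
    have hpn : ∀ θ, ‖p θ‖ = R := fun θ => by
      simp only [hp]
      rw [norm_mul, Complex.norm_exp_ofReal_mul_I]; simp [hR.le]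
    have hpc : Continuous p := by fun_prop
    have hfc : Continuous (fun θ => f (p θ)) :=
      hf.continuousOn.comp_continuous hpc (fun θ => by simp [hpn, hR1])
    have hgm : Measurable (fun θ => ENNReal.ofReal ‖f (p θ)‖) :=
      (ENNReal.continuous_ofReal.comp hfc.norm).measurable
    set μ : Measure ℂ := ((volume.restrict (Set.Ico (0:ℝ) (2*π))).withDensity
      (fun θ => ENNReal.ofReal ‖f (p θ)‖)).map p with hμ
    have hμu : μ univ ≤ ENNReal.ofReal (max Cn 0) := by
      rw [hμ, Measure.map_apply hpc.measurable MeasurableSet.univ, preimage_univ,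
        withDensity_apply _ MeasurableSet.univ, Measure.restrict_univ]
      exact (hCn R hR.le hR1).trans (ENNReal.ofReal_le_ofReal (le_max_left _ _))
    have hae : ∀ᵐ w ∂μ, ‖w‖ = R := by
      rw [hμ, ae_map_iff hpc.measurable.aemeasurable
        (measurableSet_eq_fun (by fun_prop) (by fun_prop))]
      exact Eventually.of_forall hpn
    refine (measure_mono ?_).trans ((weak_bound hR hl hae).trans ?_)
    · rintro z ⟨hz, hz2⟩
      refine ⟨hz, ?_⟩
      have hb := poisson_bound hf hR hR1 hz
      rw [hμ, lintegral_map (by fun_prop) hpc.measurable,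
        lintegral_withDensity_eq_lintegral_mul _ hgm (by fun_prop)]
      by_contra hc
      push Not at hc
      have : ENNReal.ofReal ‖f z‖ ≤ ENNReal.ofReal (R - ‖z‖) * ENNReal.ofReal lam :=
        hb.trans (mul_le_mul_right hc _)
      rw [← ENNReal.ofReal_mul (by linarith), ENNReal.ofReal_le_ofReal_iff
        (mul_nonneg (by linarith) hl.le)] at this
      nlinarith
    · refine (mul_le_mul_right hμu _).trans ?_
      rw [← ENNReal.ofReal_mul (by positivity)]
      apply ENNReal.ofReal_le_ofReal
      rw [div_mul_eq_mul_div]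
      gcongr
      linarith
  have hmono : Monotone (fun n : ℕ =>
      {z : ℂ | ‖z‖ < 1 - 1 / ((n:ℝ) + 2) ∧ lam * (1 - ‖z‖) < ‖f z‖}) := by
    intro m n hmn z hz
    refine ⟨hz.1.trans_le ?_, hz.2⟩
    have : (m:ℝ) ≤ n := by exact_mod_cast hmn
    gcongr
  calc _ ≤ volume (⋃ n : ℕ,
      {z : ℂ | ‖z‖ < 1 - 1 / ((n:ℝ) + 2) ∧ lam * (1 - ‖z‖) < ‖f z‖}) := by
        apply measure_mono
        rintro z ⟨hz, hz2⟩
        rw [mem_ball_zero_iff] at hz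
        obtain ⟨n, hn⟩ := exists_nat_one_div_lt (sub_pos.2 hz)
        refine mem_iUnion.2 ⟨n, ?_, hz2⟩
        have : 1 / ((n:ℝ) + 2) ≤ 1 / ((n:ℝ) + 1) :=
          one_div_le_one_div_of_le (by positivity) (by linarith)
        linarith
    _ = ⨆ n : ℕ, _ := hmono.measure_iUnion
    _ ≤ _ := by
        refine iSup_le fun n => key _ ?_ ?_
        · have : 1 / ((n:ℝ) + 2) < 1 := by
            rw [div_lt_one (by positivity)]
            have : (0:ℝ) ≤ n := by positivity
            linarith
          linarith
        · have : 0 < 1 / ((n:ℝ) + 2) := by positivity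
          linarith
end
end

section
/- Let f be holomorphic in the unit disc D such that (1−|z|)^{−1}|f(z)| belongs to weak L^1 of D with respect to area measure, i.e. there is C > 0 with Area{z ∈ D : |f(z)| > λ(1−|z|)} ≤ C/λ for all λ > 0. Then f belongs to the Hardy space H^p for every 0 < p < 1. -/
open MeasureTheory Real Set Filter

noncomputable section

lemma submean (p : ℝ) (hp : 0 < p) (g : ℂ → ℂ) (c : ℂ) (s : ℝ) (hs : 0 < s)
    (hg : AnalyticOnNhd ℂ g (Metric.closedBall c s)) :
    ‖g c‖ ^ p ≤ circleAverage (fun w => ‖g w‖ ^ p) c s := by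
  by_cases h0 : g c = 0
  · rw [h0, norm_zero, Real.zero_rpow hp.ne']
    exact circleAverage_nonneg_of_nonneg fun x _ => by positivity
  have hs' : |s| = s := abs_of_pos hs
  have hsub : Metric.sphere c |s| ⊆ Metric.closedBall c s := by
    rw [hs']; exact Metric.sphere_subset_closedBall
  have hlogint : CircleIntegrable (fun w => Real.log ‖g w‖) c s :=
    MeromorphicOn.circleIntegrable_log_norm (hg.mono hsub).meromorphicOn
  have hJ : Real.log ‖g c‖ ≤ circleAverage (fun w => Real.log ‖g w‖) c s := by
    have := AnalyticOnNhd.circleAverage_log_norm (R := s) (f := g) (c := c) hs.ne'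
      (by rwa [hs']) h0
    rw [this]
    have : 0 ≤ ∑ᶠ u, (MeromorphicOn.divisor g (Metric.closedBall c |s|) u : ℝ)
        * Real.log (s * ‖c - u‖⁻¹) := by
      refine finsum_nonneg fun u => ?_
      by_cases hu : u ∈ Metric.closedBall c |s|
      · refine mul_nonneg ?_ ?_
        · exact_mod_cast (MeromorphicOn.AnalyticOnNhd.divisor_nonneg (by rwa [hs'])) u
        · rcases eq_or_ne u c with rfl | hne
          · simp
          · have hpos : 0 < ‖c - u‖ := norm_pos_iff.2 (sub_ne_zero.2 hne.symm)
            apply Real.log_nonneg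
            rw [← div_eq_mul_inv, one_le_div hpos]
            rw [hs', Metric.mem_closedBall, dist_comm, dist_eq_norm] at hu
            exact hu
      · rw [Function.locallyFinsuppWithin.apply_eq_zero_of_notMem _ hu]; simp
    linarith
  have hA : 0 < ‖g c‖ := norm_pos_iff.2 h0
  set A := ‖g c‖ ^ p with hAdef
  have hApos : 0 < A := Real.rpow_pos_of_pos hA p
  set L : ℂ → ℝ := fun w => A * (1 - p * Real.log ‖g c‖) + (A * p) * Real.log ‖g w‖ with hL
  set L' : ℂ → ℝ := fun w => if g w = 0 then 0 else L w with hL'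
  have hcod : L =ᶠ[codiscreteWithin (Metric.sphere c |s|)] L' := by
    have h1 := AnalyticOnNhd.preimage_zero_mem_codiscreteWithin (f := g)
      (U := Metric.closedBall c s) (x := c) hg h0 (by simp [hs.le])
      ((convex_closedBall c s).isConnected ⟨c, by simp [hs.le]⟩)
    filter_upwards [codiscreteWithin_mono hsub h1] with w hw
    have : g w ≠ 0 := by simpa using hw
    simp [hL', this]
  have hLint : CircleIntegrable L c s := by
    apply CircleIntegrable.add (circleIntegrable_const _ _ _)
    exact IntervalIntegrable.const_mul hlogint _
  have hL'int : CircleIntegrable L' c s := hLint.congr_codiscreteWithin hcod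
  have huint : CircleIntegrable (fun w => ‖g w‖ ^ p) c s := by
    apply ContinuousOn.circleIntegrable hs.le
    rw [hs'] at hsub
    exact ((hg.continuousOn.mono hsub).norm).rpow_const fun _ _ => Or.inr hp.le
  have hle : circleAverage L' c s ≤ circleAverage (fun w => ‖g w‖ ^ p) c s := by
    apply circleAverage_mono hL'int huint
    intro w _
    by_cases hw : g w = 0
    · simp only [hL', hw, if_true]; positivity
    · have hwp : 0 < ‖g w‖ := norm_pos_iff.2 hw
      simp only [hL', hL, hw, if_false]
      have e1 : ‖g w‖ ^ p = A * Real.exp (p * Real.log ‖g w‖ - p * Real.log ‖g c‖) := by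
        rw [hAdef, Real.rpow_def_of_pos hwp, Real.rpow_def_of_pos hA, ← Real.exp_add]
        congr 1; ring
      rw [e1]
      have := Real.add_one_le_exp (p * Real.log ‖g w‖ - p * Real.log ‖g c‖)
      nlinarith
  rw [← circleAverage_congr_codiscreteWithin hcod hs.ne'] at hle
  have hLav : circleAverage L c s = A * (1 - p * Real.log ‖g c‖)
      + (A * p) * circleAverage (fun w => Real.log ‖g w‖) c s := by
    have hli : CircleIntegrable (fun w => (A * p) * Real.log ‖g w‖) c s :=
      IntervalIntegrable.const_mul hlogint _
    rw [hL, circleAverage_fun_add (circleIntegrable_const _ _ _) hli, circleAverage_const]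
    congr 1
    exact circleAverage_fun_smul (a := A * p) (f := fun w => Real.log ‖g w‖)
  have : (A * p) * Real.log ‖g c‖ ≤ (A * p) * circleAverage (fun w => Real.log ‖g w‖) c s := by
    gcongr
  nlinarith

lemma circleAverage_normSq (z : ℂ) (s : ℝ) :
    circleAverage (fun w => ‖w‖ ^ 2) z s = ‖z‖ ^ 2 + s ^ 2 := by
  have e : ∀ φ : ℝ, ‖circleMap z s φ‖ ^ 2 = (‖z‖ ^ 2 + s ^ 2) + ((2 * s * z.re) * Real.cos φ
      + (2 * s * z.im) * Real.sin φ) := by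
    intro φ
    rw [← Complex.normSq_eq_norm_sq, ← Complex.normSq_eq_norm_sq, Complex.normSq_apply,
      Complex.normSq_apply]
    simp [circleMap, Complex.exp_re, Complex.exp_im]
    nlinarith [Real.sin_sq_add_cos_sq φ]
  rw [circleAverage]
  simp_rw [e]
  rw [intervalIntegral.integral_add (by simp) (Continuous.intervalIntegrable (by fun_prop) _ _),
    intervalIntegral.integral_add (Continuous.intervalIntegrable (by fun_prop) _ _)
     (Continuous.intervalIntegrable (by fun_prop) _ _)]
  simp
  field_simp

def NN (f : ℂ → ℂ) (p : ℝ) (z : ℂ) : ℝ :=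
  ∫ θ in (0:ℝ)..(2 * π), ‖f (Complex.exp ((θ:ℂ) * Complex.I) * z)‖ ^ p

lemma NN_continuousOn (f : ℂ → ℂ) (hf : DifferentiableOn ℂ f (Metric.ball 0 1)) (p : ℝ)
    (hp : 0 < p) : ContinuousOn (NN f p) (Metric.ball 0 1) := by
  rw [continuousOn_iff_continuous_domRestrict]
  change Continuous fun z : Metric.ball (0:ℂ) 1 =>
    ∫ θ in (0:ℝ)..(2 * π), ‖f (Complex.exp ((θ:ℂ) * Complex.I) * z)‖ ^ p
  apply intervalIntegral.continuous_parametric_intervalIntegral_of_continuous'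
  change Continuous fun x : Metric.ball (0:ℂ) 1 × ℝ =>
    ‖f (Complex.exp ((x.2:ℂ) * Complex.I) * x.1)‖ ^ p
  refine Continuous.rpow_const ?_ fun _ => Or.inr hp.le
  refine (hf.continuousOn.comp_continuous (by fun_prop) ?_).norm
  rintro ⟨⟨z, hz⟩, t⟩
  simpa [Complex.norm_exp_ofReal_mul_I] using hz

lemma NN_submean (f : ℂ → ℂ) (hf : DifferentiableOn ℂ f (Metric.ball 0 1)) (p : ℝ)
    (hp : 0 < p) (z : ℂ) (s : ℝ) (hs : 0 < s) (hzs : ‖z‖ + s < 1) :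
    NN f p z ≤ circleAverage (NN f p) z s := by
  have hmap : ∀ θ : ℝ, ∀ w ∈ Metric.closedBall z s,
      Complex.exp ((θ:ℂ) * Complex.I) * w ∈ Metric.ball (0:ℂ) 1 := by
    intro θ w hw
    rw [mem_ball_zero_iff, norm_mul, Complex.norm_exp_ofReal_mul_I, one_mul]
    have h1 : ‖w - z‖ ≤ s := by simpa [dist_eq_norm] using hw
    have h2 := norm_add_le (w - z) z
    rw [sub_add_cancel] at h2
    linarith
  have hcm : ∀ φ, circleMap z s φ ∈ Metric.closedBall z s := fun φ =>
    circleMap_mem_closedBall z hs.le φ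
  have hcont : Continuous fun x : ℝ × ℝ =>
      ‖f (Complex.exp ((x.1:ℂ) * Complex.I) * circleMap z s x.2)‖ ^ p := by
    refine Continuous.rpow_const ?_ fun _ => Or.inr hp.le
    refine (hf.continuousOn.comp_continuous (by fun_prop) ?_).norm
    intro x
    exact hmap _ _ (hcm _)
  have hpt : ∀ θ : ℝ, ‖f (Complex.exp ((θ:ℂ) * Complex.I) * z)‖ ^ p ≤
      (2 * π)⁻¹ * ∫ φ in (0:ℝ)..(2 * π),
        ‖f (Complex.exp ((θ:ℂ) * Complex.I) * circleMap z s φ)‖ ^ p := by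
    intro θ
    have := submean p hp (fun w => f (Complex.exp ((θ:ℂ) * Complex.I) * w)) z s hs ?_
    · simpa [circleAverage] using this
    · intro w hw
      have h1 : AnalyticAt ℂ f (Complex.exp ((θ:ℂ) * Complex.I) * w) :=
        hf.analyticAt (Metric.isOpen_ball.mem_nhds (hmap θ w hw))
      exact h1.fun_comp (by fun_prop)
  calc NN f p z ≤ ∫ θ in (0:ℝ)..(2 * π), (2 * π)⁻¹ * ∫ φ in (0:ℝ)..(2 * π),
        ‖f (Complex.exp ((θ:ℂ) * Complex.I) * circleMap z s φ)‖ ^ p := by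
        apply intervalIntegral.integral_mono_on (by positivity)
        · apply Continuous.intervalIntegrable
          refine Continuous.rpow_const ?_ fun _ => Or.inr hp.le
          refine (hf.continuousOn.comp_continuous (by fun_prop) ?_).norm
          intro x
          exact hmap _ _ (by simp [hs.le])
        · apply Continuous.intervalIntegrable
          apply Continuous.mul continuous_const
          exact intervalIntegral.continuous_parametric_intervalIntegral_of_continuous' hcont _ _
        · intro θ _; exact hpt θ
    _ = circleAverage (NN f p) z s := by
        rw [intervalIntegral.integral_const_mul, circleAverage, smul_eq_mul]
        congr 1
        simp only [NN]
        apply intervalIntegral_intervalIntegral_swap (F := fun θ φ =>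
          ‖f (Complex.exp ((θ:ℂ) * Complex.I) * circleMap z s φ)‖ ^ p)
        apply IntegrableOn.mono_set (t := Icc 0 (2*π) ×ˢ Icc 0 (2*π))
        · exact ContinuousOn.integrableOn_compact (isCompact_Icc.prod isCompact_Icc)
            hcont.continuousOn
        · rw [uIoc_of_le (by positivity)]
          exact prod_mono Ioc_subset_Icc_self Ioc_subset_Icc_self

lemma NN_eq (f : ℂ → ℂ) (p : ℝ) (z : ℂ) (a : ℝ) :
    NN f p z = ∫ θ in a..(a + 2 * π), ‖f (‖z‖ * Complex.exp ((θ:ℂ) * Complex.I))‖ ^ p := by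
  have hper : Function.Periodic (fun θ : ℝ => ‖f (‖z‖ * Complex.exp ((θ:ℂ) * Complex.I))‖ ^ p)
      (2 * π) := by
    intro θ
    have : Complex.exp (((θ + 2 * π : ℝ) : ℂ) * Complex.I) = Complex.exp ((θ:ℂ) * Complex.I) := by
      push_cast
      rw [add_mul]
      exact Complex.exp_periodic _
    simp only [this]
  rw [hper.intervalIntegral_add_eq a (z.arg), NN]
  have := intervalIntegral.integral_comp_add_right (a := 0) (b := 2 * π)
    (fun θ : ℝ => ‖f (‖z‖ * Complex.exp ((θ:ℂ) * Complex.I))‖ ^ p) z.arg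
  rw [zero_add, add_comm (2 * π)] at this
  rw [← this]
  congr 1
  ext θ
  congr 3
  conv_lhs => rw [← Complex.norm_mul_exp_arg_mul_I z]
  push_cast
  rw [add_mul, Complex.exp_add]
  ring

lemma NN_radial (f : ℂ → ℂ) (p : ℝ) (z w : ℂ) (h : ‖z‖ = ‖w‖) : NN f p z = NN f p w := by
  rw [NN_eq f p z 0, NN_eq f p w 0, h]

lemma NN_mono (f : ℂ → ℂ) (hf : DifferentiableOn ℂ f (Metric.ball 0 1)) (p : ℝ)
    (hp : 0 < p) (r R : ℝ) (hr : 0 ≤ r) (hrR : r ≤ R) (hR : R < 1) :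
    NN f p r ≤ NN f p R := by
  have hcontN := NN_continuousOn f hf p hp
  apply le_of_forall_pos_le_add
  intro ε hε
  have hsub : Metric.closedBall (0:ℂ) R ⊆ Metric.ball 0 1 := Metric.closedBall_subset_ball hR
  obtain ⟨z, hz, hmax⟩ := (isCompact_closedBall (0:ℂ) R).exists_isMaxOn
    (f := fun w => NN f p w + ε * ‖w‖ ^ 2) ⟨(r:ℂ), by simp [abs_of_nonneg hr, hrR]⟩
    ((hcontN.mono hsub).add (by fun_prop))
  rw [mem_closedBall_zero_iff] at hz
  have hzR : ‖z‖ = R := by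
    by_contra hne
    have hlt : ‖z‖ < R := lt_of_le_of_ne hz hne
    set s := R - ‖z‖ with hs
    have hspos : 0 < s := by linarith
    have h1 := NN_submean f hf p hp z s hspos (by linarith)
    have hball : ∀ w ∈ Metric.sphere z |s|, w ∈ Metric.closedBall (0:ℂ) R := by
      intro w hw
      rw [mem_closedBall_zero_iff]
      have h1 : ‖w - z‖ = s := by
        rw [abs_of_pos hspos] at hw
        simpa [dist_eq_norm] using hw
      have h2 := norm_add_le (w - z) z
      rw [sub_add_cancel] at h2
      linarith
    have i1 : CircleIntegrable (NN f p) z s := by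
      apply ContinuousOn.circleIntegrable hspos.le
      apply hcontN.mono
      rw [abs_of_pos hspos] at hball
      exact fun w hw => hsub (hball w hw)
    have i2 : CircleIntegrable (fun w : ℂ => ε * ‖w‖ ^ 2) z s :=
      ContinuousOn.circleIntegrable hspos.le (by fun_prop)
    have h2 : circleAverage (fun w => NN f p w + ε * ‖w‖ ^ 2) z s ≤ NN f p z + ε * ‖z‖ ^ 2 :=
      circleAverage_mono_on_of_le_circle (CircleIntegrable.add i1 i2)
        fun w hw => hmax (hball w hw)
    rw [circleAverage_fun_add i1 i2] at h2
    have h3 : circleAverage (fun w : ℂ => ε * ‖w‖ ^ 2) z s = ε * (‖z‖ ^ 2 + s ^ 2) := by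
      rw [← circleAverage_normSq]
      exact circleAverage_fun_smul (a := ε) (f := fun w : ℂ => ‖w‖ ^ 2)
    rw [h3] at h2
    have : 0 < ε * s ^ 2 := by positivity
    nlinarith
  have h4 : NN f p r + ε * ‖(r:ℂ)‖ ^ 2 ≤ NN f p z + ε * ‖z‖ ^ 2 :=
    hmax (show (r:ℂ) ∈ Metric.closedBall 0 R by simp [abs_of_nonneg hr, hrR])
  have hR0 : 0 ≤ R := hr.trans hrR
  rw [NN_radial f p z R (by simp [hzR, abs_of_nonneg hR0]), hzR] at h4
  have : R ^ 2 ≤ 1 := by nlinarith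
  have : 0 ≤ ε * ‖(r:ℂ)‖ ^ 2 := by positivity
  nlinarith

lemma NN_ofReal (f : ℂ → ℂ) (hf : DifferentiableOn ℂ f (Metric.ball 0 1)) (p : ℝ)
    (hp : 0 < p) (r : ℝ) (hr : 0 ≤ r) (hr1 : r < 1) (a : ℝ) :
    ∫⁻ θ in Set.Ioc a (a + 2 * π),
      ENNReal.ofReal (‖f ((r:ℂ) * Complex.exp ((θ:ℂ) * Complex.I))‖ ^ p)
      = ENNReal.ofReal (NN f p r) := by
  have hn : ‖(r:ℂ)‖ = r := by simp [abs_of_nonneg hr]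
  have hcont : Continuous fun θ : ℝ => ‖f ((r:ℂ) * Complex.exp ((θ:ℂ) * Complex.I))‖ ^ p := by
    refine Continuous.rpow_const ?_ fun _ => Or.inr hp.le
    refine (hf.continuousOn.comp_continuous (by fun_prop) ?_).norm
    intro x
    rw [mem_ball_zero_iff, norm_mul, Complex.norm_exp_ofReal_mul_I, mul_one, hn]
    exact hr1
  rw [NN_eq f p r a, hn, intervalIntegral.integral_of_le (by linarith [Real.two_pi_pos]),
    ofReal_integral_eq_lintegral_ofReal]
  · exact (hcont.intervalIntegrable a (a + 2 * π)).1
  · exact ae_of_all _ fun θ => by positivity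

lemma NN_polar (f : ℂ → ℂ) (hf : DifferentiableOn ℂ f (Metric.ball 0 1)) (p : ℝ)
    (hp : 0 < p) (δ : ℝ) (hδ : 0 < δ) (hδ2 : δ ≤ 1 / 2) :
    ENNReal.ofReal δ * ENNReal.ofReal (1 / 2 * NN f p ((1 - δ : ℝ) : ℂ)) ≤
      ∫⁻ z in {z : ℂ | 1 - δ < ‖z‖ ∧ ‖z‖ < 1}, ENNReal.ofReal (‖f z‖ ^ p) := by
  set A := {z : ℂ | 1 - δ < ‖z‖ ∧ ‖z‖ < 1} with hA
  have hAm : MeasurableSet A :=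
    (measurableSet_lt measurable_const measurable_norm).inter
      (measurableSet_lt measurable_norm measurable_const)
  set S := Ioo (1 - δ) 1 ×ˢ Ioo (-π) π with hS
  have hSm : MeasurableSet S := measurableSet_Ioo.prod measurableSet_Ioo
  have hST : S ⊆ polarCoord.target := by
    rw [polarCoord_target]
    refine prod_mono (fun x hx => ?_) le_rfl
    simp only [mem_Ioo, mem_Ioi] at *
    linarith
  have hsymm : ∀ q : ℝ × ℝ, Complex.polarCoord.symm q
      = (q.1 : ℂ) * Complex.exp ((q.2:ℂ) * Complex.I) := by
    intro q
    rw [Complex.polarCoord_symm_apply, Complex.exp_mul_I]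
    push_cast; rfl
  have hcont : ContinuousOn (fun q : ℝ × ℝ =>
      q.1 * ‖f ((q.1 : ℂ) * Complex.exp ((q.2:ℂ) * Complex.I))‖ ^ p) S := by
    apply ContinuousOn.mul (by fun_prop)
    refine ContinuousOn.rpow_const ?_ fun _ _ => Or.inr hp.le
    refine (hf.continuousOn.comp (by fun_prop) ?_).norm
    intro q hq
    have h1 := hq.1.1
    have h2 := hq.1.2
    rw [mem_ball_zero_iff, norm_mul, Complex.norm_exp_ofReal_mul_I, mul_one, Complex.norm_real,
      Real.norm_eq_abs, abs_lt]
    constructor <;> linarith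
  rw [← lintegral_indicator hAm, ← Complex.lintegral_comp_polarCoord_symm]
  refine le_trans ?_ (lintegral_mono_set hST)
  have hEq : ∫⁻ q in S, ENNReal.ofReal q.1 • A.indicator (fun z => ENNReal.ofReal (‖f z‖ ^ p))
        (Complex.polarCoord.symm q)
      = ∫⁻ q in S, ENNReal.ofReal
        (q.1 * ‖f ((q.1 : ℂ) * Complex.exp ((q.2:ℂ) * Complex.I))‖ ^ p) := by
    apply setLIntegral_congr_fun hSm
    intro q hq
    have h1 := hq.1.1
    have h2 := hq.1.2
    have hq0 : 0 ≤ q.1 := by linarith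
    have hmem : (q.1 : ℂ) * Complex.exp ((q.2:ℂ) * Complex.I) ∈ A := by
      simp only [hA, mem_ofPred_eq, norm_mul, Complex.norm_exp_ofReal_mul_I, mul_one,
        Complex.norm_real, Real.norm_eq_abs, abs_of_nonneg hq0]
      exact ⟨h1, h2⟩
    simp only [hsymm]
    rw [indicator_of_mem hmem, smul_eq_mul, ENNReal.ofReal_mul hq0]
  rw [hEq, Measure.volume_eq_prod, setLIntegral_prod _ ?_]
  · calc _ = ∫⁻ r in Ioo (1 - δ) 1, ENNReal.ofReal (1 / 2 * NN f p ((1 - δ : ℝ) : ℂ)) := by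
          rw [setLIntegral_const, Real.volume_Ioo, mul_comm]
          congr 2; ring
      _ ≤ _ := by
          apply setLIntegral_mono' measurableSet_Ioo
          intro r hr
          have h1 := hr.1
          have h2 := hr.2
          have hr0 : 0 ≤ r := by linarith
          have hN := NN_ofReal f hf p hp r hr0 h2 (-π)
          rw [show -π + 2 * π = π by ring] at hN
          have e : ∫⁻ θ in Ioo (-π) π, ENNReal.ofReal
              (r * ‖f ((r : ℂ) * Complex.exp ((θ:ℂ) * Complex.I))‖ ^ p)
              = ENNReal.ofReal r * ENNReal.ofReal (NN f p r) := by
            rw [← hN, ← lintegral_const_mul' _ _ ENNReal.ofReal_ne_top,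
              setLIntegral_congr Ioo_ae_eq_Ioc]
            simp_rw [ENNReal.ofReal_mul hr0]
          dsimp only
          rw [e, ENNReal.ofReal_mul (by norm_num)]
          gcongr
          · linarith
          · exact NN_mono f hf p hp (1 - δ) r (by linarith) h1.le h2
  · exact (hcont.aemeasurable hSm).ennreal_ofReal

lemma area_est (f : ℂ → ℂ) (C : ℝ) (hC : 0 < C)
    (hf : DifferentiableOn ℂ f (Metric.ball 0 1))
    (harea : ∀ lam > (0:ℝ),
      volume {z ∈ Metric.ball (0:ℂ) 1 | lam * (1 - ‖z‖) < ‖f z‖} ≤ ENNReal.ofReal (C / lam))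
    (p : ℝ) (hp : 0 < p) (δ : ℝ) (hδ : 0 < δ) (hδ2 : δ ≤ 1 / 2) :
    ∫⁻ z in {z : ℂ | 1 - δ < ‖z‖ ∧ ‖z‖ < 1}, ENNReal.ofReal (‖f z‖ ^ p) ≤
      ENNReal.ofReal δ * (ENNReal.ofReal p * ∫⁻ t in Ioi (0:ℝ),
        min (ENNReal.ofReal (2 * π)) (ENNReal.ofReal (C / t)) * ENNReal.ofReal (t ^ (p - 1))) := by
  set A := {z : ℂ | 1 - δ < ‖z‖ ∧ ‖z‖ < 1} with hA
  have hAm : MeasurableSet A :=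
    (measurableSet_lt measurable_const measurable_norm).inter
      (measurableSet_lt measurable_norm measurable_const)
  have hAb : A ⊆ Metric.ball 0 1 := fun z hz => by simpa using hz.2
  have hvol : volume A ≤ ENNReal.ofReal δ * ENNReal.ofReal (2 * π) := by
    have hAe : A = Metric.ball 0 1 \ Metric.closedBall 0 (1 - δ) := by
      ext z; simp [hA, and_comm]
    rw [hAe, measure_sdiff (Metric.closedBall_subset_ball (by linarith))
      measurableSet_closedBall.nullMeasurableSet measure_closedBall_lt_top.ne,
      Complex.volume_ball, Complex.volume_closedBall]
    have hpi : (↑NNReal.pi : ENNReal) = ENNReal.ofReal π := by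
      rw [ENNReal.ofReal, ← NNReal.coe_real_pi, Real.toNNReal_coe]
    rw [hpi, ← ENNReal.ofReal_pow (by norm_num), ← ENNReal.ofReal_pow (by linarith),
      ← ENNReal.ofReal_mul (by norm_num), ← ENNReal.ofReal_mul (by positivity),
      ← ENNReal.ofReal_sub _ (by positivity), ← ENNReal.ofReal_mul hδ.le]
    apply ENNReal.ofReal_le_ofReal
    nlinarith [Real.pi_pos, mul_pos Real.pi_pos (mul_pos hδ hδ)]
  rw [lintegral_rpow_eq_lintegral_meas_lt_mul _ (ae_of_all _ fun z => norm_nonneg (f z))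
    ((hf.continuousOn.mono hAb).norm.aemeasurable hAm) hp]
  rw [mul_left_comm]
  gcongr ENNReal.ofReal p * ?_
  rw [← lintegral_const_mul' _ _ ENNReal.ofReal_ne_top]
  apply setLIntegral_mono' measurableSet_Ioi
  intro t ht
  have ht : 0 < t := ht
  rw [← mul_assoc]
  gcongr
  rw [mul_min, Measure.restrict_apply' hAm]
  refine le_min ((measure_mono inter_subset_right).trans hvol) ?_
  have h1 := harea (t / δ) (by positivity)
  rw [← ENNReal.ofReal_mul hδ.le, show δ * (C / t) = C / (t / δ) by field_simp]
  refine (measure_mono ?_).trans h1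
  rintro z ⟨hz1, hz2⟩
  refine ⟨hAb hz2, ?_⟩
  have hz1 : t < ‖f z‖ := hz1
  have h3 : 1 - δ < ‖z‖ := hz2.1
  have h4 : t / δ * (1 - ‖z‖) ≤ t / δ * δ := by
    gcongr
    linarith
  rw [div_mul_cancel₀ _ hδ.ne'] at h4
  linarith

lemma B_finite (C : ℝ) (hC : 0 < C) (p : ℝ) (hp : 0 < p) (hp1 : p < 1) :
    (ENNReal.ofReal p * ∫⁻ t in Ioi (0:ℝ),
      min (ENNReal.ofReal (2 * π)) (ENNReal.ofReal (C / t)) * ENNReal.ofReal (t ^ (p - 1))) < ⊤ := by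
  apply ENNReal.mul_lt_top ENNReal.ofReal_lt_top
  rw [← Ioc_union_Ioi_eq_Ioi (zero_le_one' ℝ)]
  refine (lintegral_union_le _ _ _).trans_lt (ENNReal.add_lt_top.2 ⟨?_, ?_⟩)
  · have hi : IntegrableOn (fun t : ℝ => (2 * π) * t ^ (p - 1)) (Ioc 0 1) := by
      have := (intervalIntegral.intervalIntegrable_rpow' (a := 0) (b := 1)
        (r := p - 1) (by linarith)).1
      exact this.const_mul _
    refine lt_of_le_of_lt ?_ (Integrable.lintegral_lt_top hi)
    apply setLIntegral_mono' measurableSet_Ioc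
    intro t ht
    rw [ENNReal.ofReal_mul (p := 2 * π) (q := t ^ (p - 1)) (by positivity)]
    exact mul_le_mul' (min_le_left _ _) le_rfl
  · have hi : IntegrableOn (fun t : ℝ => C * t ^ (p - 2)) (Ioi 1) :=
      (integrableOn_Ioi_rpow_of_lt (by linarith) one_pos).const_mul _
    refine lt_of_le_of_lt ?_ (Integrable.lintegral_lt_top hi)
    apply setLIntegral_mono' measurableSet_Ioi
    intro t ht
    have ht0 : 0 < t := one_pos.trans ht
    have e : C * t ^ (p - 2) = (C / t) * t ^ (p - 1) := by
      rw [show p - 2 = (p - 1) - 1 by ring, Real.rpow_sub_one ht0.ne' (p - 1)]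
      ring
    rw [e, ENNReal.ofReal_mul (p := C / t) (q := t ^ (p - 1)) (by positivity)]
    exact mul_le_mul' (min_le_right _ _) le_rfl

theorem weak_area_bound_implies_Hp (f : ℂ → ℂ) (C : ℝ) (hC : 0 < C)
    (hf : DifferentiableOn ℂ f (Metric.ball 0 1))
    (harea : ∀ lam > (0:ℝ),
      volume {z ∈ Metric.ball (0:ℂ) 1 | lam * (1 - ‖z‖) < ‖f z‖} ≤ ENNReal.ofReal (C / lam)) :
    ∀ p : ℝ, 0 < p → p < 1 → ∃ K : ℝ, ∀ r : ℝ, 0 ≤ r → r < 1 →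
      (∫⁻ θ in Set.Ico (0:ℝ) (2*π),
          ENNReal.ofReal (‖f ((r:ℂ) * Complex.exp ((θ:ℂ) * Complex.I))‖ ^ p))
        ≤ ENNReal.ofReal K := by
  intro p hp hp1
  have hB := B_finite C hC p hp hp1
  have hest := area_est f C hC hf harea p hp
  set B := (ENNReal.ofReal p * ∫⁻ t in Ioi (0:ℝ),
      min (ENNReal.ofReal (2 * π)) (ENNReal.ofReal (C / t)) * ENNReal.ofReal (t ^ (p - 1)))
  have key : ∀ r : ℝ, 1 / 2 ≤ r → r < 1 → NN f p r ≤ 2 * B.toReal := by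
    intro r h1 h2
    have h3 := (NN_polar f hf p hp (1 - r) (by linarith) (by linarith)).trans
      (hest (1 - r) (by linarith) (by linarith))
    rw [sub_sub_cancel, ENNReal.mul_le_mul_iff_right
      (by simpa using h2) ENNReal.ofReal_ne_top] at h3
    have := (ENNReal.ofReal_le_iff_le_toReal hB.ne).1 h3
    linarith
  refine ⟨2 * B.toReal, fun r hr hr1 => ?_⟩
  have hN := NN_ofReal f hf p hp r hr hr1 0
  rw [zero_add] at hN
  rw [setLIntegral_congr Ico_ae_eq_Ioc, hN]
  apply ENNReal.ofReal_le_ofReal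
  rcases le_total (1 / 2) r with h | h
  · exact key r h hr1
  · exact (NN_mono f hf p hp r (1 / 2) hr h (by norm_num)).trans (key (1 / 2) le_rfl (by norm_num))
end
end
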